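/- For integers a_0, …, a_15, suppose that each of Re(α_1), Im(α_1), Re(α_2), Im(α_2) is congruent to 1 or −1 modulo 8. Then N_4 ≡ N_8 · N_16 + 2 (mod 16). -/

import Mathlib

open Complex Finset

noncomputable def zeta16 : ℂ := Complex.exp (2 * Real.pi * Complex.I / 16)

noncomputable def fpoly (a : Fin 16 → ℤ) (x : ℂ) : ℂ := ∑ k : Fin 16, (a k : ℂ) * x ^ (k : ℕ)

noncomputable def Nprod (a : Fin 16 → ℤ) (d : ℕ) : ℂ :=
  ∏ l ∈ Finset.filter (fun l => Nat.gcd l 16 = d) (Finset.range 16), fpoly a (zeta16 ^ l)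

def circMatrix (a : Fin 16 → ℤ) : Matrix (Fin 16) (Fin 16) ℤ := fun i j => a (i - j)

def S16 : Set ℤ := { n | ∃ a : Fin 16 → ℤ, n = (circMatrix a).det }

def bcoef (a : Fin 16 → ℤ) (k : Fin 16) : ℤ := (a k + a (k + 8)) + (a (k + 4) + a (k + 12))
def ccoef (a : Fin 16 → ℤ) (k : Fin 16) : ℤ := (a k + a (k + 8)) - (a (k + 4) + a (k + 12))
def ecoef (a : Fin 16 → ℤ) (k : Fin 16) : ℤ := a k - a (k + 8)

def reF (p0 p1 p2 p3 : ℤ) : ℤ := p0 ^ 2 - p2 ^ 2 + 2 * (p1 * p3)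
def imF (p0 p1 p2 p3 : ℤ) : ℤ := 2 * (p0 * p2) - p1 ^ 2 + p3 ^ 2
def good (x : ℤ) : Prop := x % 8 = 1 ∨ x % 8 = 7

instance (x : ℤ) : Decidable (good x) := by unfold good; infer_instance

def qP0 (e0 e1 e2 e3 e4 e5 e6 e7 : ℤ) : ℤ :=
  e0 ^ 2 - e4 ^ 2 - 2 * (e2 * e6) + 2 * (e1 * e7) + 2 * (e3 * e5)
def qP1 (e0 e1 e2 e3 e4 e5 e6 e7 : ℤ) : ℤ :=
  2 * (e0 * e2) - 2 * (e4 * e6) - e1 ^ 2 + e5 ^ 2 + 2 * (e3 * e7)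
def qP2 (e0 e1 e2 e3 e4 e5 e6 e7 : ℤ) : ℤ :=
  2 * (e0 * e4) + e2 ^ 2 - e6 ^ 2 - 2 * (e1 * e3) + 2 * (e5 * e7)
def qP3 (e0 e1 e2 e3 e4 e5 e6 e7 : ℤ) : ℤ :=
  2 * (e0 * e6) + 2 * (e2 * e4) - 2 * (e1 * e5) - e3 ^ 2 + e7 ^ 2

lemma sq_congr {n x y : ℤ} (h : x ≡ y [ZMOD 2 * n]) : x ^ 2 ≡ y ^ 2 [ZMOD 4 * n] := by
  obtain ⟨k, hk⟩ := h.symm.dvd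
  have : x = y + 2 * n * k := by linarith
  subst this
  refine (Int.modEq_iff_dvd.2 ⟨k * y + n * k ^ 2, by ring⟩).symm

lemma two_mul_congr {n x y z w : ℤ} (h : x ≡ y [ZMOD n]) (h' : z ≡ w [ZMOD n]) :
    2 * (x * z) ≡ 2 * (y * w) [ZMOD 2 * n] := (h.mul h').mul_left'

lemma reF_congr {p0 p1 p2 p3 q0 q1 q2 q3 : ℤ} (h0 : p0 ≡ q0 [ZMOD 4]) (h1 : p1 ≡ q1 [ZMOD 4])
    (h2 : p2 ≡ q2 [ZMOD 4]) (h3 : p3 ≡ q3 [ZMOD 4]) :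
    reF p0 p1 p2 p3 ≡ reF q0 q1 q2 q3 [ZMOD 8] :=
  ((sq_congr (n := 2) h0).sub (sq_congr (n := 2) h2)).add (two_mul_congr h1 h3)

lemma imF_congr {p0 p1 p2 p3 q0 q1 q2 q3 : ℤ} (h0 : p0 ≡ q0 [ZMOD 4]) (h1 : p1 ≡ q1 [ZMOD 4])
    (h2 : p2 ≡ q2 [ZMOD 4]) (h3 : p3 ≡ q3 [ZMOD 4]) :
    imF p0 p1 p2 p3 ≡ imF q0 q1 q2 q3 [ZMOD 8] :=
  ((two_mul_congr h0 h2).sub (sq_congr (n := 2) h1)).add (sq_congr (n := 2) h3)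

lemma sq2 {x y : ℤ} (h : x ≡ y [ZMOD 2]) : x ^ 2 ≡ y ^ 2 [ZMOD 4] := sq_congr (n := 1) h
lemma mul2 {x y z w : ℤ} (h : x ≡ y [ZMOD 2]) (h' : z ≡ w [ZMOD 2]) :
    2 * (x * z) ≡ 2 * (y * w) [ZMOD 4] := two_mul_congr h h'

lemma good_congr {x y : ℤ} (h : x ≡ y [ZMOD 8]) (hx : good x) : good y := by
  unfold good at *
  unfold Int.ModEq at h
  rwa [← h]

/-- the finite check on residues -/
lemma finite_check : ∀ r0 r1 r2 r3 r4 r5 r6 r7 : Fin 2,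
    good (reF (qP0 r0 r1 r2 r3 r4 r5 r6 r7) (qP1 r0 r1 r2 r3 r4 r5 r6 r7)
      (qP2 r0 r1 r2 r3 r4 r5 r6 r7) (qP3 r0 r1 r2 r3 r4 r5 r6 r7)) →
    good (imF (qP0 r0 r1 r2 r3 r4 r5 r6 r7) (qP1 r0 r1 r2 r3 r4 r5 r6 r7)
      (qP2 r0 r1 r2 r3 r4 r5 r6 r7) (qP3 r0 r1 r2 r3 r4 r5 r6 r7)) →
    ∀ u0 u1 u2 u3 : Fin 2,
    good (reF (r0 + r4 + 2 * u0) (r1 + r5 + 2 * u1) (r2 + r6 + 2 * u2) (r3 + r7 + 2 * u3)) →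
    good (imF (r0 + r4 + 2 * u0) (r1 + r5 + 2 * u1) (r2 + r6 + 2 * u2) (r3 + r7 + 2 * u3)) →
    ((r1 + r5 + 2 * u1 + 2 * r5 : ℤ) ^ 2 + (r3 + r7 + 2 * u3 + 2 * r7 : ℤ) ^ 2
      - 2 * ((r0 + r4 + 2 * u0 + 2 * r4) * (r2 + r6 + 2 * u2 + 2 * r6))) % 8 = 1 := by
  decide +kernel

lemma ex_res (x : ℤ) : ∃ r : Fin 2, x ≡ (r : ℤ) [ZMOD 2] := by
  rcases Int.emod_two_eq_zero_or_one x with h | h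
  · exact ⟨0, by simp [Int.ModEq, h]⟩
  · exact ⟨1, by simp [Int.ModEq, h]⟩

lemma ex_res4 {c e f : ℤ} {r s : Fin 2} (he : e ≡ (r : ℤ) [ZMOD 2]) (hf : f ≡ (s : ℤ) [ZMOD 2])
    (hc : c ≡ e + f [ZMOD 2]) : ∃ u : Fin 2, c ≡ (r : ℤ) + s + 2 * u [ZMOD 4] := by
  obtain ⟨k, hk⟩ := (hc.trans (he.add hf)).symm.dvd
  obtain ⟨u, hu⟩ := ex_res k
  refine ⟨u, ?_⟩
  have := (Int.ModEq.mul_left' (c := 2) hu).add_left ((r : ℤ) + s)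
  have h2 : c = r + s + 2 * k := by linarith
  rw [h2]
  exact this

lemma b_congr {b c f : ℤ} {s : Fin 2} {v : ℤ} (hf : f ≡ (s : ℤ) [ZMOD 2])
    (hc : c ≡ v [ZMOD 4]) (hb : b ≡ c + 2 * f [ZMOD 4]) : b ≡ v + 2 * s [ZMOD 4] :=
  hb.trans (hc.add (Int.ModEq.mul_left' (c := 2) hf))

lemma int_main (e0 e1 e2 e3 e4 e5 e6 e7 c0 c1 c2 c3 b0 b1 b2 b3 : ℤ)
    (hc0 : c0 ≡ e0 + e4 [ZMOD 2]) (hc1 : c1 ≡ e1 + e5 [ZMOD 2])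
    (hc2 : c2 ≡ e2 + e6 [ZMOD 2]) (hc3 : c3 ≡ e3 + e7 [ZMOD 2])
    (hb0 : b0 ≡ c0 + 2 * e4 [ZMOD 4]) (hb1 : b1 ≡ c1 + 2 * e5 [ZMOD 4])
    (hb2 : b2 ≡ c2 + 2 * e6 [ZMOD 4]) (hb3 : b3 ≡ c3 + 2 * e7 [ZMOD 4])
    (g1 : good (reF (qP0 e0 e1 e2 e3 e4 e5 e6 e7) (qP1 e0 e1 e2 e3 e4 e5 e6 e7)
      (qP2 e0 e1 e2 e3 e4 e5 e6 e7) (qP3 e0 e1 e2 e3 e4 e5 e6 e7)))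
    (g2 : good (imF (qP0 e0 e1 e2 e3 e4 e5 e6 e7) (qP1 e0 e1 e2 e3 e4 e5 e6 e7)
      (qP2 e0 e1 e2 e3 e4 e5 e6 e7) (qP3 e0 e1 e2 e3 e4 e5 e6 e7)))
    (g3 : good (reF c0 c1 c2 c3)) (g4 : good (imF c0 c1 c2 c3)) :
    b1 ^ 2 + b3 ^ 2 - 2 * (b0 * b2) ≡ 1 [ZMOD 8] := by
  obtain ⟨r0, h0⟩ := ex_res e0
  obtain ⟨r1, h1⟩ := ex_res e1
  obtain ⟨r2, h2⟩ := ex_res e2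
  obtain ⟨r3, h3⟩ := ex_res e3
  obtain ⟨r4, h4⟩ := ex_res e4
  obtain ⟨r5, h5⟩ := ex_res e5
  obtain ⟨r6, h6⟩ := ex_res e6
  obtain ⟨r7, h7⟩ := ex_res e7
  obtain ⟨u0, k0⟩ := ex_res4 h0 h4 hc0
  obtain ⟨u1, k1⟩ := ex_res4 h1 h5 hc1
  obtain ⟨u2, k2⟩ := ex_res4 h2 h6 hc2
  obtain ⟨u3, k3⟩ := ex_res4 h3 h7 hc3
  have m0 := b_congr h4 k0 hb0
  have m1 := b_congr h5 k1 hb1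
  have m2 := b_congr h6 k2 hb2
  have m3 := b_congr h7 k3 hb3
  have q0 : qP0 e0 e1 e2 e3 e4 e5 e6 e7 ≡ qP0 r0 r1 r2 r3 r4 r5 r6 r7 [ZMOD 4] :=
    ((((sq2 h0).sub (sq2 h4)).sub (mul2 h2 h6)).add (mul2 h1 h7)).add (mul2 h3 h5)
  have q1 : qP1 e0 e1 e2 e3 e4 e5 e6 e7 ≡ qP1 r0 r1 r2 r3 r4 r5 r6 r7 [ZMOD 4] :=
    ((((mul2 h0 h2).sub (mul2 h4 h6)).sub (sq2 h1)).add (sq2 h5)).add (mul2 h3 h7)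
  have q2 : qP2 e0 e1 e2 e3 e4 e5 e6 e7 ≡ qP2 r0 r1 r2 r3 r4 r5 r6 r7 [ZMOD 4] :=
    ((((mul2 h0 h4).add (sq2 h2)).sub (sq2 h6)).sub (mul2 h1 h3)).add (mul2 h5 h7)
  have q3 : qP3 e0 e1 e2 e3 e4 e5 e6 e7 ≡ qP3 r0 r1 r2 r3 r4 r5 r6 r7 [ZMOD 4] :=
    ((((mul2 h0 h6).add (mul2 h2 h4)).sub (mul2 h1 h5)).sub (sq2 h3)).add (sq2 h7)
  have key := finite_check r0 r1 r2 r3 r4 r5 r6 r7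
    (good_congr (reF_congr q0 q1 q2 q3) g1) (good_congr (imF_congr q0 q1 q2 q3) g2) u0 u1 u2 u3
    (good_congr (reF_congr k0 k1 k2 k3) g3) (good_congr (imF_congr k0 k1 k2 k3) g4)
  have l := ((sq_congr (n := 2) m1).add (sq_congr (n := 2) m3)).sub (two_mul_congr m0 m2)
  exact Int.ModEq.trans l key

lemma zeta16_pow_four : zeta16 ^ 4 = I := by
  unfold zeta16
  rw [← Complex.exp_nat_mul]
  refine Eq.trans ?_ Complex.exp_pi_div_two_mul_I
  congr 1
  push_cast
  ring

lemma fpoly_neg_one (a : Fin 16 → ℤ) (w : ℂ) (hw : w ^ 8 = -1) :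
    fpoly a w = ecoef a 0 + ecoef a 1 * w + ecoef a 2 * w ^ 2 + ecoef a 3 * w ^ 3
      + ecoef a 4 * w ^ 4 + ecoef a 5 * w ^ 5 + ecoef a 6 * w ^ 6 + ecoef a 7 * w ^ 7 := by
  simp only [fpoly, Fin.sum_univ_succ, ecoef]
  simp
  linear_combination (a 8 + a 9 * w + a 10 * w ^ 2 + a 11 * w ^ 3 + a 12 * w ^ 4 + a 13 * w ^ 5
    + a 14 * w ^ 6 + a 15 * w ^ 7) * hw

lemma fpoly_poly8 (a : Fin 16 → ℤ) (w : ℂ) (hw : w ^ 8 = 1) :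
    fpoly a w = (a 0 + a 8) + (a 1 + a 9) * w + (a 2 + a 10) * w ^ 2 + (a 3 + a 11) * w ^ 3
      + (a 4 + a 12) * w ^ 4 + (a 5 + a 13) * w ^ 5 + (a 6 + a 14) * w ^ 6
      + (a 7 + a 15) * w ^ 7 := by
  simp only [fpoly, Fin.sum_univ_succ]
  simp
  linear_combination (a 8 + a 9 * w + a 10 * w ^ 2 + a 11 * w ^ 3 + a 12 * w ^ 4 + a 13 * w ^ 5
    + a 14 * w ^ 6 + a 15 * w ^ 7) * hw

lemma fpoly_y (a : Fin 16 → ℤ) (y : ℂ) (hy : y ^ 4 = -1) :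
    fpoly a y = ccoef a 0 + ccoef a 1 * y + ccoef a 2 * y ^ 2 + ccoef a 3 * y ^ 3 := by
  rw [fpoly_poly8 a y (by linear_combination (y ^ 4 - 1) * hy)]
  simp [ccoef]
  linear_combination ((a 4 + a 12) + (a 5 + a 13) * y + (a 6 + a 14) * y ^ 2
    + (a 7 + a 15) * y ^ 3) * hy

lemma fpoly_one (a : Fin 16 → ℤ) (y : ℂ) (hy : y ^ 4 = 1) :
    fpoly a y = bcoef a 0 + bcoef a 1 * y + bcoef a 2 * y ^ 2 + bcoef a 3 * y ^ 3 := by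
  rw [fpoly_poly8 a y (by linear_combination (y ^ 4 + 1) * hy)]
  simp [bcoef]
  linear_combination ((a 4 + a 12) + (a 5 + a 13) * y + (a 6 + a 14) * y ^ 2
    + (a 7 + a 15) * y ^ 3) * hy

lemma pair16 (a : Fin 16 → ℤ) (w y : ℂ) (hy : w ^ 2 = y) (h4 : y ^ 4 = -1)
    (e0 e1 e2 e3 e4 e5 e6 e7 : ℤ)
    (h0 : ecoef a 0 = e0) (h1 : ecoef a 1 = e1) (h2 : ecoef a 2 = e2) (h3 : ecoef a 3 = e3)
    (h4' : ecoef a 4 = e4) (h5 : ecoef a 5 = e5) (h6 : ecoef a 6 = e6) (h7 : ecoef a 7 = e7) :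
    fpoly a w * fpoly a (-w) = qP0 e0 e1 e2 e3 e4 e5 e6 e7 + qP1 e0 e1 e2 e3 e4 e5 e6 e7 * y
      + qP2 e0 e1 e2 e3 e4 e5 e6 e7 * y ^ 2 + qP3 e0 e1 e2 e3 e4 e5 e6 e7 * y ^ 3 := by
  have hw : w ^ 8 = -1 := by rw [← h4, ← hy]; ring
  rw [fpoly_neg_one a w hw, fpoly_neg_one a (-w) (by rw [← hw]; ring), h0, h1, h2, h3, h4', h5,
    h6, h7]
  simp only [qP0, qP1, qP2, qP3]
  push_cast
  subst hy
  linear_combination (2 * (e2 * e6 : ℂ) + e4 ^ 2 + 2 * e4 * e6 * w ^ 2 + e6 ^ 2 * w ^ 4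
    - 2 * e1 * e7 - 2 * e3 * e5 - (2 * e3 * e7 + e5 ^ 2) * w ^ 2 - 2 * e5 * e7 * w ^ 4
    - e7 ^ 2 * w ^ 6) * hw

lemma pair8 (p0 p1 p2 p3 : ℤ) (y : ℂ) (hy : y ^ 2 = I) :
    (p0 + p1 * y + p2 * y ^ 2 + p3 * y ^ 3 : ℂ)
      * (p0 + p1 * (-y) + p2 * (-y) ^ 2 + p3 * (-y) ^ 3)
      = (reF p0 p1 p2 p3 : ℤ) + (imF p0 p1 p2 p3 : ℤ) * I := by
  have hI : I ^ 2 = -1 := Complex.I_sq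
  have e : (p0 + p1 * y + p2 * y ^ 2 + p3 * y ^ 3 : ℂ)
      * (p0 + p1 * (-y) + p2 * (-y) ^ 2 + p3 * (-y) ^ 3)
      = (p0 + p2 * y ^ 2) ^ 2 - y ^ 2 * (p1 + p3 * y ^ 2) ^ 2 := by ring
  rw [e, hy]
  simp only [reF, imF]
  push_cast
  linear_combination (p2 ^ 2 - 2 * p1 * p3 - p3 ^ 2 * I : ℂ) * hI

lemma good_of {z : ℂ} {A B : ℤ} (hz : z = (A : ℂ) + B * I)
    (h : ∃ m : ℤ, z.re = ((8 * m + 1 : ℤ) : ℝ) ∨ z.re = ((8 * m - 1 : ℤ) : ℝ))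
    (h' : ∃ m : ℤ, z.im = ((8 * m + 1 : ℤ) : ℝ) ∨ z.im = ((8 * m - 1 : ℤ) : ℝ)) :
    good A ∧ good B := by
  have hr : z.re = (A : ℝ) := by rw [hz]; simp
  have hi : z.im = (B : ℝ) := by rw [hz]; simp
  rw [hr] at h
  rw [hi] at h'
  obtain ⟨m, h⟩ := h
  obtain ⟨n, h'⟩ := h'
  have h1 : A = 8 * m + 1 ∨ A = 8 * m - 1 := by exact_mod_cast h
  have h2 : B = 8 * n + 1 ∨ B = 8 * n - 1 := by exact_mod_cast h'
  unfold good
  omega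

theorem N4_cong_N8N16_add_two (a : Fin 16 → ℤ)
    (N4 N8 N16 : ℤ)
    (h4 : (N4 : ℂ) = Nprod a 4) (h8 : (N8 : ℂ) = Nprod a 8) (h16 : (N16 : ℂ) = Nprod a 16)
    (hre1 : ∃ m : ℤ,
      (fpoly a zeta16 * fpoly a (zeta16 ^ 5) * fpoly a (zeta16 ^ 9) * fpoly a (zeta16 ^ 13)).re
        = ((8 * m + 1 : ℤ) : ℝ) ∨
      (fpoly a zeta16 * fpoly a (zeta16 ^ 5) * fpoly a (zeta16 ^ 9) * fpoly a (zeta16 ^ 13)).re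
        = ((8 * m - 1 : ℤ) : ℝ))
    (him1 : ∃ m : ℤ,
      (fpoly a zeta16 * fpoly a (zeta16 ^ 5) * fpoly a (zeta16 ^ 9) * fpoly a (zeta16 ^ 13)).im
        = ((8 * m + 1 : ℤ) : ℝ) ∨
      (fpoly a zeta16 * fpoly a (zeta16 ^ 5) * fpoly a (zeta16 ^ 9) * fpoly a (zeta16 ^ 13)).im
        = ((8 * m - 1 : ℤ) : ℝ))
    (hre2 : ∃ m : ℤ,
      (fpoly a (zeta16 ^ 2) * fpoly a ((zeta16 ^ 2) ^ 5)).re = ((8 * m + 1 : ℤ) : ℝ) ∨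
      (fpoly a (zeta16 ^ 2) * fpoly a ((zeta16 ^ 2) ^ 5)).re = ((8 * m - 1 : ℤ) : ℝ))
    (him2 : ∃ m : ℤ,
      (fpoly a (zeta16 ^ 2) * fpoly a ((zeta16 ^ 2) ^ 5)).im = ((8 * m + 1 : ℤ) : ℝ) ∨
      (fpoly a (zeta16 ^ 2) * fpoly a ((zeta16 ^ 2) ^ 5)).im = ((8 * m - 1 : ℤ) : ℝ)) :
    N4 ≡ N8 * N16 + 2 [ZMOD 16] := by
  have z4 := zeta16_pow_four
  have hI : I ^ 2 = -1 := Complex.I_sq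
  generalize hz : zeta16 = z at *
  have y2 : (z ^ 2) ^ 2 = I := by rw [← z4]; ring
  have y4 : (z ^ 2) ^ 4 = -1 := by rw [← hI, ← z4]; ring
  have z8 : z ^ 8 = -1 := by rw [← hI, ← z4]; ring
  have z9 : z ^ 9 = -z := by linear_combination z * z8
  have z13 : z ^ 13 = -z ^ 5 := by linear_combination z ^ 5 * z8
  have y5 : (z ^ 2) ^ 5 = -z ^ 2 := by linear_combination z ^ 2 * z8
  have A1 : fpoly a z * fpoly a (z ^ 5) * fpoly a (z ^ 9) * fpoly a (z ^ 13) =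
      (fpoly a z * fpoly a (-z)) * (fpoly a (z ^ 5) * fpoly a (-z ^ 5)) := by
    rw [z9, z13]; ring
  rw [pair16 a z (z ^ 2) rfl y4 _ _ _ _ _ _ _ _ rfl rfl rfl rfl rfl rfl rfl rfl,
    pair16 a (z ^ 5) (-z ^ 2) (by linear_combination z ^ 2 * z8)
      (by linear_combination z8) _ _ _ _ _ _ _ _ rfl rfl rfl rfl rfl rfl rfl rfl,
    pair8 _ _ _ _ _ y2] at A1
  have A2 : fpoly a (z ^ 2) * fpoly a ((z ^ 2) ^ 5) =
      (reF (ccoef a 0) (ccoef a 1) (ccoef a 2) (ccoef a 3) : ℤ)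
        + (imF (ccoef a 0) (ccoef a 1) (ccoef a 2) (ccoef a 3) : ℤ) * I := by
    rw [y5, fpoly_y a (z ^ 2) y4, fpoly_y a (-z ^ 2) (by linear_combination z8),
      pair8 _ _ _ _ _ y2]
  obtain ⟨g1, g2⟩ := good_of A1 hre1 him1
  obtain ⟨g3, g4⟩ := good_of A2 hre2 him2
  have key := int_main _ _ _ _ _ _ _ _ _ _ _ _ (bcoef a 0) (bcoef a 1) (bcoef a 2) (bcoef a 3)
    (by simp [ccoef, ecoef, Int.ModEq]; omega) (by simp [ccoef, ecoef, Int.ModEq]; omega)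
    (by simp [ccoef, ecoef, Int.ModEq]; omega) (by simp [ccoef, ecoef, Int.ModEq]; omega)
    (by simp [ccoef, bcoef, ecoef, Int.ModEq]; omega)
    (by simp [ccoef, bcoef, ecoef, Int.ModEq]; omega)
    (by simp [ccoef, bcoef, ecoef, Int.ModEq]; omega)
    (by simp [ccoef, bcoef, ecoef, Int.ModEq]; omega) g1 g2 g3 g4
  have f4 : (Finset.range 16).filter (fun l => Nat.gcd l 16 = 4) = {4, 12} := by decide
  have f8 : (Finset.range 16).filter (fun l => Nat.gcd l 16 = 8) = {8} := by decide
  have f16 : (Finset.range 16).filter (fun l => Nat.gcd l 16 = 16) = {0} := by decide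
  rw [Nprod, f4, Finset.prod_pair (by norm_num), hz, z4,
    show z ^ 12 = -I by linear_combination z ^ 4 * z8 - z4,
    fpoly_one a I (by simp), fpoly_one a (-I) (by linear_combination (I ^ 2 - 1) * hI)] at h4
  rw [Nprod, f8, Finset.prod_singleton, hz, z8, fpoly_one a (-1) (by norm_num)] at h8
  rw [Nprod, f16, Finset.prod_singleton, pow_zero, fpoly_one a 1 (by norm_num)] at h16
  have n4 : N4 = (bcoef a 0 - bcoef a 2) ^ 2 + (bcoef a 1 - bcoef a 3) ^ 2 := by
    have : (N4 : ℂ) = (bcoef a 0 - bcoef a 2) ^ 2 + (bcoef a 1 - bcoef a 3) ^ 2 := by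
      rw [h4]
      have e : ∀ b0 b1 b2 b3 : ℂ, (b0 + b1 * I + b2 * I ^ 2 + b3 * I ^ 3)
          * (b0 + b1 * (-I) + b2 * (-I) ^ 2 + b3 * (-I) ^ 3)
          = (b0 - b2) ^ 2 + (b1 - b3) ^ 2 := by
        intro b0 b1 b2 b3
        have e2 : (b0 + b1 * I + b2 * I ^ 2 + b3 * I ^ 3)
          * (b0 + b1 * (-I) + b2 * (-I) ^ 2 + b3 * (-I) ^ 3)
          = (b0 + b2 * I ^ 2) ^ 2 - I ^ 2 * (b1 + b3 * I ^ 2) ^ 2 := by ring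
        rw [e2, hI]; ring
      exact e _ _ _ _
    exact_mod_cast this
  have n8 : N8 = bcoef a 0 - bcoef a 1 + bcoef a 2 - bcoef a 3 := by
    have : (N8 : ℂ) = bcoef a 0 - bcoef a 1 + bcoef a 2 - bcoef a 3 := by rw [h8]; ring
    exact_mod_cast this
  have n16 : N16 = bcoef a 0 + bcoef a 1 + bcoef a 2 + bcoef a 3 := by
    have : (N16 : ℂ) = bcoef a 0 + bcoef a 1 + bcoef a 2 + bcoef a 3 := by rw [h16]; ring
    exact_mod_cast this
  obtain ⟨k, hk⟩ := key.dvd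
  refine Int.modEq_iff_dvd.2 ⟨k, ?_⟩
  rw [n4, n8, n16]
  linear_combination 2 * hk
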